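/- arXiv:2205.08194 — 5 statements merged into one kernel-verified Lean document; each statement's English description precedes it below -/
import Mathlib

section
/- There exist τ > 0 and μ > 0 such that B ᵀΛB − τI ⪯ −I and the block matrix Ω := [[H_clᵀΛH_cl − e^{μ}Λ + τKᵀK, H_clᵀΛB],[BᵀΛH_cl, −I]] is negative definite. -/
open Matrix

/-!
Negating `Ω` and taking the Schur complement of its lower right block `I` turns negative
definiteness of `Ω` into `e^μ Λ - S ≻ 0`, where `S = H_clᵀΛH_cl + τKᵀK + H_clᵀΛB (H_clᵀΛB)ᵀ` does
not depend on `μ`. A large multiple of a positive definite matrix dominates any Hermitian matrix, so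
every large `τ` satisfies the first condition and then every large `μ` the second.
-/

section

open Filter
open scoped ComplexOrder MatrixOrder

variable {𝕜 m n k : Type*} [RCLike 𝕜]

theorem eventually_posDef_smul_one_sub [Finite n] [DecidableEq n] {M : Matrix n n 𝕜}
    (hM : M.IsHermitian) : ∀ᶠ c : ℝ in atTop, (c • (1 : Matrix n n 𝕜) - M).PosDef := by
  have := Fintype.ofFinite n
  obtain ⟨r, hr⟩ := M.finite_real_spectrum.bddAbove
  have hle : M ≤ algebraMap ℝ (Matrix n n 𝕜) r :=
    le_algebraMap_of_spectrum_le (fun _ hx => hr hx) hM.isSelfAdjoint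
  filter_upwards [eventually_gt_atTop r] with c hc
  have hpos : ((c - r) • (1 : Matrix n n 𝕜)).PosDef := PosDef.one.smul (sub_pos.2 hc)
  have hsplit : c • (1 : Matrix n n 𝕜) - M = (c - r) • 1 + (algebraMap ℝ _ r - M) := by
    rw [Algebra.algebraMap_eq_smul_one, sub_smul]
    abel
  exact hsplit ▸ hpos.add_posSemidef (le_iff.1 hle)

theorem eventually_posDef_smul_sub [Finite n] {P M : Matrix n n 𝕜} (hP : P.PosDef)
    (hM : M.IsHermitian) : ∀ᶠ c : ℝ in atTop, (c • P - M).PosDef := by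
  have := Fintype.ofFinite n
  classical
  -- With `P = SᴴS`, congruence by `S⁻¹` reduces the claim to `P = I`.
  obtain ⟨S, hS, rfl⟩ :=
    CStarAlgebra.isStrictlyPositive_iff_eq_star_mul_self.1 hP.isStrictlyPositive
  have hinv : S⁻¹ * S = 1 := nonsing_inv_mul S ((isUnit_iff_isUnit_det S).1 hS)
  have hinv_star : star S * (S⁻¹)ᴴ = 1 := by
    rw [star_eq_conjTranspose, ← conjTranspose_mul, hinv, conjTranspose_one]
  have hM_congr : star S * ((S⁻¹)ᴴ * M * S⁻¹) * S = M := by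
    calc star S * ((S⁻¹)ᴴ * M * S⁻¹) * S
        = star S * (S⁻¹)ᴴ * M * (S⁻¹ * S) := by simp only [Matrix.mul_assoc]
      _ = M := by rw [hinv_star, hinv, Matrix.one_mul, Matrix.mul_one]
  have hcongr (c : ℝ) :
      c • (star S * S) - M = star S * (c • 1 - (S⁻¹)ᴴ * M * S⁻¹) * S := by
    rw [Matrix.mul_sub, Matrix.sub_mul, hM_congr, Matrix.mul_smul, Matrix.mul_one,
      Matrix.smul_mul]
  filter_upwards [eventually_posDef_smul_one_sub (isHermitian_conjTranspose_mul_mul S⁻¹ hM)]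
    with c hc
  rwa [hcongr, IsUnit.posDef_star_left_conjugate_iff hS]

theorem posDef_fromBlocks₂₂_iff [Finite m] [Fintype n] [DecidableEq n] (A : Matrix m m 𝕜)
    (B : Matrix m n 𝕜) {D : Matrix n n 𝕜} (hD : D.PosDef) :
    (fromBlocks A B Bᴴ D).PosDef ↔ (A - B * D⁻¹ * Bᴴ).PosDef := by
  have := Fintype.ofFinite m
  classical
  let := hD.isUnit.invertible
  have hsemi := hD.fromBlocks₂₂ A B
  have hunit : IsUnit (fromBlocks A B Bᴴ D) ↔ IsUnit (A - B * D⁻¹ * Bᴴ) := by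
    rw [isUnit_fromBlocks_iff_of_invertible₂₂, invOf_eq_nonsing_inv]
  exact ⟨fun h => (hsemi.1 h.posSemidef).posDef_iff_isUnit.2 (hunit.1 h.isUnit),
    fun h => (hsemi.2 h.posSemidef).posDef_iff_isUnit.2 (hunit.2 h.isUnit)⟩

variable [Fintype n] [Fintype k] [DecidableEq m]

/-- The block matrix `Ω` of the closed loop matrix `A` (the paper's `H_cl`), as a function of the
multiplier `τ` and the rate `μ`. Transposes become conjugate transposes, so that complex systems are
covered too. -/
noncomputable def Omega (Λ A : Matrix n n 𝕜) (B : Matrix n m 𝕜) (K : Matrix k n 𝕜)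
    (τ μ : ℝ) : Matrix (n ⊕ m) (n ⊕ m) 𝕜 :=
  fromBlocks (Aᴴ * Λ * A - Real.exp μ • Λ + τ • (Kᴴ * K)) (Aᴴ * Λ * B) (Bᴴ * Λ * A) (-1)

theorem posDef_neg_Omega_iff [Fintype m] {Λ : Matrix n n 𝕜} (hΛ : Λ.IsHermitian)
    (A : Matrix n n 𝕜) (B : Matrix n m 𝕜) (K : Matrix k n 𝕜) (τ μ : ℝ) :
    (-Omega Λ A B K τ μ).PosDef ↔
      (Real.exp μ • Λ -
        (Aᴴ * Λ * A + τ • (Kᴴ * K) + Aᴴ * Λ * B * (Aᴴ * Λ * B)ᴴ)).PosDef := by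
  have hoffdiag : -(Bᴴ * Λ * A) = (-(Aᴴ * Λ * B))ᴴ := by
    simp only [conjTranspose_neg, conjTranspose_mul, conjTranspose_conjTranspose, hΛ.eq,
      Matrix.mul_assoc]
  rw [Omega, fromBlocks_neg, neg_neg, hoffdiag, posDef_fromBlocks₂₂_iff _ _ PosDef.one]
  congr! 1
  rw [inv_one, Matrix.mul_one, conjTranspose_neg, Matrix.neg_mul, Matrix.mul_neg, neg_neg]
  abel

theorem eventually_posDef_neg_Omega [Finite m] {Λ : Matrix n n 𝕜} (hΛ : Λ.PosDef)
    (A : Matrix n n 𝕜) (B : Matrix n m 𝕜) (K : Matrix k n 𝕜) (τ : ℝ) :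
    ∀ᶠ μ : ℝ in atTop, (-Omega Λ A B K τ μ).PosDef := by
  have := Fintype.ofFinite m
  simp only [posDef_neg_Omega_iff hΛ.isHermitian]
  refine Real.tendsto_exp_atTop.eventually (eventually_posDef_smul_sub hΛ ?_)
  have hτ : (τ • (Kᴴ * K)).IsHermitian :=
    (isHermitian_conjTranspose_mul_self K).smul (IsSelfAdjoint.all τ)
  exact ((isHermitian_conjTranspose_mul_mul A hΛ.isHermitian).add hτ).add
    (isHermitian_mul_conjTranspose_self _)

theorem exists_tau_mu_Omega_negdef_general [Finite m] {Λ : Matrix n n 𝕜} (hΛ : Λ.PosDef)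
    (A : Matrix n n 𝕜) (B : Matrix n m 𝕜) (K : Matrix k n 𝕜) :
    ∀ᶠ τ : ℝ in atTop, ∀ᶠ μ : ℝ in atTop,
      (-(Bᴴ * Λ * B - τ • (1 : Matrix m m 𝕜) + 1)).PosSemidef ∧ (-Omega Λ A B K τ μ).PosDef := by
  have hN : (Bᴴ * Λ * B + 1).IsHermitian :=
    (isHermitian_conjTranspose_mul_mul B hΛ.isHermitian).add isHermitian_one
  filter_upwards [eventually_posDef_smul_one_sub hN] with τ hτ
  filter_upwards [eventually_posDef_neg_Omega hΛ A B K τ] with μ hΩ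
  refine ⟨?_, hΩ⟩
  convert hτ.posSemidef using 1
  abel

end

/-- there exist `τ > 0` and `μ > 0` such that `BᵀΛB - τI ⪯ -I` and the block
matrix `Ω = [[H_clᵀΛH_cl - e^μ Λ + τKᵀK, H_clᵀΛB],[BᵀΛH_cl, -I]]` is negative definite. -/
theorem exists_tau_mu_Omega_negdef {n m : ℕ}
    (Λ : Matrix (Fin n) (Fin n) ℝ) (hΛdiag : Λ.IsDiag) (hΛpos : ∀ i, 0 < Λ i i)
    (H : Matrix (Fin n) (Fin n) ℝ) (B : Matrix (Fin n) (Fin m) ℝ)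
    (K : Matrix (Fin m) (Fin n) ℝ) :
    ∃ τ : ℝ, 0 < τ ∧ ∃ μ : ℝ, 0 < μ ∧
      (-(Bᵀ * Λ * B - τ • (1 : Matrix (Fin m) (Fin m) ℝ) + 1)).PosSemidef ∧
      (-(Matrix.fromBlocks
          ((H + B * K)ᵀ * Λ * (H + B * K) - Real.exp μ • Λ + τ • (Kᵀ * K))
          ((H + B * K)ᵀ * Λ * B)
          (Bᵀ * Λ * (H + B * K))
          (-1 : Matrix (Fin m) (Fin m) ℝ))).PosDef := by
  have hΛ : Λ.PosDef := by
    rw [← hΛdiag.diagonal_diag]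
    exact PosDef.diagonal hΛpos
  -- Over `ℝ`, `ᴴ` is `ᵀ` definitionally.
  exact ((Filter.eventually_gt_atTop 0).and
    ((exists_tau_mu_Omega_negdef_general hΛ (H + B * K) B K).mono fun _ hτ =>
      ((Filter.eventually_gt_atTop 0).and hτ).exists)).exists
end

section
/- There exist μ > 0 and ρ ∈ ℝ such that for all continuously differentiable functions X₁, X₂ : [0,1] → ℝⁿ satisfying the boundary condition X_i(0) = H_cl X_i(1) + Bφ(K X_i(1)) for i = 1, 2, setting X̃ := X₁ − X₂, one has ∫₀¹ e^{μz} X̃(z)ᵀ(−Λ X̃′(z) + ρ X̃(z)) dz ≤ 0 (i.e., the operator X ↦ −ΛX_z + ρX, with this boundary condition, is non-accretive with respect to the weighted inner product ⟨X₁, X₂⟩_μ := ∫₀¹ e^{μz} X₁(z)ᵀX₂(z) dz). -/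
open Matrix Set

/-- Componentwise saturation function with saturation levels `ubar`. -/
noncomputable def saturate {m : ℕ} (ubar : Fin m → ℝ) (u : Fin m → ℝ) : Fin m → ℝ :=
  fun i => min |u i| (ubar i) * Real.sign (u i)

/-- Dead-zone nonlinearity `φ(u) = σ(u) - u`. -/
noncomputable def deadzone {m : ℕ} (ubar : Fin m → ℝ) (u : Fin m → ℝ) : Fin m → ℝ :=
  saturate ubar u - u

/-!
Along a `C¹` curve `X`, symmetry of `Λ` makes `-e^{μz} Xᵀ Λ X'` equal to
`-(e^{μz} Xᵀ Λ X)' / 2 + (μ / 2) e^{μz} Xᵀ Λ X`. A sufficiently negative `ρ` absorbs the last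
term, so the weighted pairing is at most `(X(0)ᵀ Λ X(0) - e^μ X(1)ᵀ Λ X(1)) / 2`. The boundary
map is Lipschitz because saturation clamps each coordinate to `[-ū_i, ū_i]`; hence for the
difference of two admissible curves a large `μ` makes this boundary term nonpositive.
-/

section Saturation

lemma min_abs_mul_sign_eq_clamp {c : ℝ} (hc : 0 ≤ c) (a : ℝ) :
    min |a| c * Real.sign a = max (-c) (min c a) := by
  rcases lt_trichotomy a 0 with ha | rfl | ha
  · rw [Real.sign_of_neg ha, abs_of_neg ha, mul_neg_one, ← max_neg_neg, neg_neg,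
      min_eq_right (ha.le.trans hc), max_comm]
  · simp [hc]
  · rw [Real.sign_of_pos ha, abs_of_pos ha, mul_one, min_comm,
      max_eq_right ((neg_nonpos.2 hc).trans (le_min hc ha.le))]

variable {m : ℕ} {ubar : Fin m → ℝ}

lemma lipschitzWith_saturate (hubar : ∀ i, 0 ≤ ubar i) : LipschitzWith 1 (saturate ubar) :=
  fun x y => edist_pi_le_iff.2 fun i => by
    simpa only [saturate, min_abs_mul_sign_eq_clamp (hubar i)] using
      ((LipschitzWith.eval i).const_min (ubar i)).const_max (-ubar i) x y

lemma lipschitzWith_deadzone (hubar : ∀ i, 0 ≤ ubar i) :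
    LipschitzWith (1 + 1) (deadzone ubar) :=
  (lipschitzWith_saturate hubar).sub LipschitzWith.id

end Saturation

lemma exists_lipschitzWith_mulVec_add_mulVec {ι κ ν : Type*} [Fintype ι] [Fintype κ] [Fintype ν]
    (A : Matrix ν ι ℝ) (B : Matrix ν κ ℝ) (K : Matrix κ ι ℝ) {c : NNReal}
    {φ : (κ → ℝ) → κ → ℝ} (hφ : LipschitzWith c φ) :
    ∃ L, LipschitzWith L fun x => A *ᵥ x + B *ᵥ φ (K *ᵥ x) :=
  ⟨_, A.mulVecLin.toContinuousLinearMap.lipschitz.add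
    (B.mulVecLin.toContinuousLinearMap.lipschitz.comp
      (hφ.comp K.mulVecLin.toContinuousLinearMap.lipschitz))⟩

lemma exists_le_mul_of_homogeneous {V : Type*} [NormedAddCommGroup V] [NormedSpace ℝ V]
    [FiniteDimensional ℝ V] {k : ℕ} (hk : k ≠ 0) {f g : V → ℝ}
    (hf : Continuous f) (hg : Continuous g)
    (hf_smul : ∀ t : ℝ, 0 ≤ t → ∀ x, f (t • x) = t ^ k * f x)
    (hg_smul : ∀ t : ℝ, 0 ≤ t → ∀ x, g (t • x) = t ^ k * g x)
    (hg_pos : ∀ x, x ≠ 0 → 0 < g x) :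
    ∃ C, 0 < C ∧ ∀ x, f x ≤ C * g x := by
  have hg_sphere : ∀ u ∈ Metric.sphere (0 : V) 1, 0 < g u := fun u hu =>
    hg_pos u (ne_zero_of_mem_unit_sphere ⟨u, hu⟩)
  obtain ⟨C, hC⟩ := (isCompact_sphere (0 : V) 1).exists_bound_of_continuousOn
    (hf.continuousOn.div hg.continuousOn fun u hu => (hg_sphere u hu).ne')
  refine ⟨max C 1, by positivity, fun x => ?_⟩
  rcases eq_or_ne x 0 with rfl | hx
  · have hf0 := hf_smul 0 le_rfl 0
    have hg0 := hg_smul 0 le_rfl 0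
    rw [zero_smul, zero_pow hk, zero_mul] at hf0 hg0
    rw [hf0, hg0, mul_zero]
  · set u := ‖x‖⁻¹ • x
    have hu : u ∈ Metric.sphere (0 : V) 1 := by simpa using norm_smul_inv_norm (𝕜 := ℝ) hx
    have hxu : x = ‖x‖ • u := (smul_inv_smul₀ (norm_ne_zero_iff.2 hx) x).symm
    have hfu : f u ≤ max C 1 * g u :=
      (div_le_iff₀ (hg_sphere u hu)).1 (((le_abs_self _).trans (hC u hu)).trans (le_max_left C 1))
    calc f x = ‖x‖ ^ k * f u := by rw [← hf_smul _ (norm_nonneg x), ← hxu]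
      _ ≤ ‖x‖ ^ k * (max C 1 * g u) := by gcongr
      _ = max C 1 * g x := by rw [mul_left_comm, ← hg_smul _ (norm_nonneg x), ← hxu]

lemma posDef_of_isDiag {ι : Type*} {Λ : Matrix ι ι ℝ} (hdiag : Λ.IsDiag) (hpos : ∀ i, 0 < Λ i i) :
    Λ.PosDef := by
  classical
  rw [← hdiag.diagonal_diag]
  exact PosDef.diagonal hpos

section QuadraticForm

variable {ι : Type*} [Fintype ι] {Λ : Matrix ι ι ℝ}

lemma smul_dotProduct_mulVec_smul (Λ : Matrix ι ι ℝ) (t : ℝ) (x : ι → ℝ) :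
    (t • x) ⬝ᵥ Λ *ᵥ (t • x) = t ^ 2 * (x ⬝ᵥ Λ *ᵥ x) := by
  rw [mulVec_smul, smul_dotProduct, dotProduct_smul, smul_eq_mul, smul_eq_mul, sq, mul_assoc]

lemma exists_dotProduct_mulVec_le_mul_dotProduct_self (Λ : Matrix ι ι ℝ) :
    ∃ C, 0 < C ∧ ∀ x, x ⬝ᵥ Λ *ᵥ x ≤ C * (x ⬝ᵥ x) :=
  exists_le_mul_of_homogeneous two_ne_zero (by fun_prop) (by fun_prop)
    (fun t _ => smul_dotProduct_mulVec_smul Λ t)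
    (fun t _ x => by
      rw [smul_dotProduct, dotProduct_smul, smul_eq_mul, smul_eq_mul, sq, mul_assoc])
    (fun _ hx => dotProduct_self_star_pos_iff.2 hx)

lemma exists_dotProduct_mulVec_le_mul_norm_sq (Λ : Matrix ι ι ℝ) :
    ∃ C, 0 < C ∧ ∀ x, x ⬝ᵥ Λ *ᵥ x ≤ C * ‖x‖ ^ 2 :=
  exists_le_mul_of_homogeneous two_ne_zero (by fun_prop) (by fun_prop)
    (fun t _ => smul_dotProduct_mulVec_smul Λ t)
    (fun t _ x => by rw [norm_smul, mul_pow, Real.norm_eq_abs, sq_abs])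
    (fun _ hx => by positivity)

lemma exists_norm_sq_le_mul_dotProduct_mulVec (hΛ : Λ.PosDef) :
    ∃ C, 0 < C ∧ ∀ x, ‖x‖ ^ 2 ≤ C * (x ⬝ᵥ Λ *ᵥ x) :=
  exists_le_mul_of_homogeneous two_ne_zero (by fun_prop) (by fun_prop)
    (fun t _ x => by rw [norm_smul, mul_pow, Real.norm_eq_abs, sq_abs])
    (fun t _ => smul_dotProduct_mulVec_smul Λ t)
    (fun _ hx => hΛ.dotProduct_mulVec_pos hx)

lemma exists_dotProduct_mulVec_sub_le_of_lipschitzWith (hΛ : Λ.PosDef) {L : NNReal}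
    {g : (ι → ℝ) → ι → ℝ} (hg : LipschitzWith L g) :
    ∃ M, ∀ x y, (g x - g y) ⬝ᵥ Λ *ᵥ (g x - g y) ≤ M * ((x - y) ⬝ᵥ Λ *ᵥ (x - y)) := by
  obtain ⟨C, hC, hC_le⟩ := exists_dotProduct_mulVec_le_mul_norm_sq Λ
  obtain ⟨D, -, hD_le⟩ := exists_norm_sq_le_mul_dotProduct_mulVec hΛ
  refine ⟨C * (L ^ 2 * D), fun x y => ?_⟩
  calc (g x - g y) ⬝ᵥ Λ *ᵥ (g x - g y) ≤ C * ‖g x - g y‖ ^ 2 := hC_le _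
    _ ≤ C * (L * ‖x - y‖) ^ 2 := by gcongr; exact hg.norm_sub_le x y
    _ = C * (L ^ 2 * ‖x - y‖ ^ 2) := by rw [mul_pow]
    _ ≤ C * (L ^ 2 * (D * ((x - y) ⬝ᵥ Λ *ᵥ (x - y)))) := by gcongr; exact hD_le _
    _ = C * (L ^ 2 * D) * ((x - y) ⬝ᵥ Λ *ᵥ (x - y)) := by ring

end QuadraticForm

lemma hasDerivAt_dotProduct {𝕜 ι : Type*} [NontriviallyNormedField 𝕜] [Fintype ι]
    {X Y : 𝕜 → ι → 𝕜} {v w : ι → 𝕜} {z : 𝕜} (hX : HasDerivAt X v z) (hY : HasDerivAt Y w z) :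
    HasDerivAt (fun t => X t ⬝ᵥ Y t) (v ⬝ᵥ Y z + X z ⬝ᵥ w) z := by
  simpa only [dotProduct, Finset.sum_add_distrib] using HasDerivAt.fun_sum fun i _ =>
    (hasDerivAt_pi.1 hX i).fun_mul (hasDerivAt_pi.1 hY i)

section WeightedEnergy

variable {ι : Type*} [Fintype ι] {Λ : Matrix ι ι ℝ} {X : ℝ → ι → ℝ}

lemma hasDerivAt_dotProduct_mulVec_self (hΛ : Λ.IsSymm) {v : ι → ℝ} {z : ℝ}
    (hX : HasDerivAt X v z) :
    HasDerivAt (fun t => X t ⬝ᵥ Λ *ᵥ X t) (2 * (X z ⬝ᵥ Λ *ᵥ v)) z := by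
  have hΛX : HasDerivAt (fun t => Λ *ᵥ X t) (Λ *ᵥ v) z :=
    Λ.mulVecLin.toContinuousLinearMap.hasFDerivAt.comp_hasDerivAt z hX
  have hcomm : v ⬝ᵥ Λ *ᵥ X z = X z ⬝ᵥ Λ *ᵥ v := by
    rw [dotProduct_mulVec, ← mulVec_transpose, hΛ.eq, dotProduct_comm]
  simpa only [hcomm, ← two_mul] using hasDerivAt_dotProduct hX hΛX

lemma hasDerivAt_exp_mul_dotProduct_mulVec_self (hΛ : Λ.IsSymm) (μ : ℝ) {v : ι → ℝ} {z : ℝ}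
    (hX : HasDerivAt X v z) :
    HasDerivAt (fun t => Real.exp (μ * t) * (X t ⬝ᵥ Λ *ᵥ X t))
      (Real.exp (μ * z) * (μ * (X z ⬝ᵥ Λ *ᵥ X z) + 2 * (X z ⬝ᵥ Λ *ᵥ v))) z := by
  have hexp : HasDerivAt (fun t => Real.exp (μ * t)) (Real.exp (μ * z) * μ) z := by
    simpa only [mul_one, id_eq] using ((hasDerivAt_id z).const_mul μ).exp
  convert! hexp.fun_mul (hasDerivAt_dotProduct_mulVec_self hΛ hX) using 1
  ring

lemma integral_exp_mul_dotProduct_le (hΛ : Λ.IsSymm) {μ ρ : ℝ}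
    (hμρ : ∀ x : ι → ℝ, μ / 2 * (x ⬝ᵥ Λ *ᵥ x) + ρ * (x ⬝ᵥ x) ≤ 0)
    {a b : ℝ} (hab : a ≤ b) {X' : ℝ → ι → ℝ}
    (hX : ∀ z ∈ Icc a b, HasDerivWithinAt X (X' z) (Icc a b) z)
    (hX' : ContinuousOn X' (Icc a b)) :
    ∫ z in a..b, Real.exp (μ * z) * (X z ⬝ᵥ (-(Λ *ᵥ X' z) + ρ • X z)) ≤
      (Real.exp (μ * a) * (X a ⬝ᵥ Λ *ᵥ X a) - Real.exp (μ * b) * (X b ⬝ᵥ Λ *ᵥ X b)) / 2 := by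
  have hXc : ContinuousOn X (Icc a b) := fun z hz => (hX z hz).continuousWithinAt
  have henergy : ContinuousOn (fun z => Real.exp (μ * z) * (X z ⬝ᵥ Λ *ᵥ X z)) (Icc a b) :=
    (by fun_prop : Continuous fun p : ℝ × (ι → ℝ) => Real.exp (μ * p.1) * (p.2 ⬝ᵥ Λ *ᵥ p.2))
      |>.comp_continuousOn (continuousOn_id.prodMk hXc)
  have hintegrand : ContinuousOn
      (fun z => Real.exp (μ * z) * (X z ⬝ᵥ (-(Λ *ᵥ X' z) + ρ • X z))) (Icc a b) :=
    (by fun_prop : Continuous fun p : ℝ × (ι → ℝ) × (ι → ℝ) =>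
        Real.exp (μ * p.1) * (p.2.1 ⬝ᵥ (-(Λ *ᵥ p.2.2) + ρ • p.2.1)))
      |>.comp_continuousOn (continuousOn_id.prodMk (hXc.prodMk hX'))
  have hderiv : ∀ z ∈ Ioo a b, HasDerivAt
      (fun t => -(Real.exp (μ * t) * (X t ⬝ᵥ Λ *ᵥ X t)) / 2)
      (-(Real.exp (μ * z) * (μ * (X z ⬝ᵥ Λ *ᵥ X z) + 2 * (X z ⬝ᵥ Λ *ᵥ X' z))) / 2) z :=
    fun z hz => (hasDerivAt_exp_mul_dotProduct_mulVec_self hΛ μ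
      ((hX z (Ioo_subset_Icc_self hz)).hasDerivAt (Icc_mem_nhds hz.1 hz.2))).fun_neg.div_const 2
  have hpointwise : ∀ z, Real.exp (μ * z) * (X z ⬝ᵥ (-(Λ *ᵥ X' z) + ρ • X z)) ≤
      -(Real.exp (μ * z) * (μ * (X z ⬝ᵥ Λ *ᵥ X z) + 2 * (X z ⬝ᵥ Λ *ᵥ X' z))) / 2 := fun z => by
    have habsorb := mul_nonpos_of_nonneg_of_nonpos (Real.exp_pos (μ * z)).le (hμρ (X z))
    rw [dotProduct_add, dotProduct_neg, dotProduct_smul, smul_eq_mul]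
    linarith
  calc ∫ z in a..b, Real.exp (μ * z) * (X z ⬝ᵥ (-(Λ *ᵥ X' z) + ρ • X z))
      ≤ -(Real.exp (μ * b) * (X b ⬝ᵥ Λ *ᵥ X b)) / 2 -
          -(Real.exp (μ * a) * (X a ⬝ᵥ Λ *ᵥ X a)) / 2 :=
        intervalIntegral.integral_le_sub_of_hasDeriv_right_of_le hab
          (henergy.fun_neg.div_const 2) (fun z hz => (hderiv z hz).hasDerivWithinAt)
          hintegrand.integrableOn_Icc fun z _ => hpointwise z
    _ = _ := by ring

end WeightedEnergy

theorem nonaccretive_general {ι : Type*} [Fintype ι] {Λ : Matrix ι ι ℝ} (hΛ : Λ.PosDef)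
    {L : NNReal} {g : (ι → ℝ) → ι → ℝ} (hg : LipschitzWith L g) :
    ∃ μ : ℝ, 0 < μ ∧ ∃ ρ : ℝ,
      ∀ X₁ X₂ X₁' X₂' : ℝ → ι → ℝ,
        (∀ z ∈ Icc (0 : ℝ) 1, HasDerivWithinAt X₁ (X₁' z) (Icc (0 : ℝ) 1) z) →
        (∀ z ∈ Icc (0 : ℝ) 1, HasDerivWithinAt X₂ (X₂' z) (Icc (0 : ℝ) 1) z) →
        ContinuousOn X₁' (Icc (0 : ℝ) 1) →
        ContinuousOn X₂' (Icc (0 : ℝ) 1) →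
        X₁ 0 = g (X₁ 1) →
        X₂ 0 = g (X₂ 1) →
        ∫ z in (0 : ℝ)..1, Real.exp (μ * z) *
            ((X₁ z - X₂ z) ⬝ᵥ (-(Λ *ᵥ (X₁' z - X₂' z)) + ρ • (X₁ z - X₂ z))) ≤ 0 := by
  obtain ⟨C, -, hC⟩ := exists_dotProduct_mulVec_le_mul_dotProduct_self Λ
  obtain ⟨M, hM⟩ := exists_dotProduct_mulVec_sub_le_of_lipschitzWith hΛ hg
  obtain ⟨μ, hμ, hMμ⟩ : ∃ μ, 0 < μ ∧ M ≤ Real.exp μ :=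
    ((Filter.eventually_gt_atTop 0).and
      (Real.tendsto_exp_atTop.eventually_ge_atTop M)).exists
  have habsorb : ∀ x, μ / 2 * (x ⬝ᵥ Λ *ᵥ x) + -(μ / 2 * C) * (x ⬝ᵥ x) ≤ 0 := fun x => by
    linarith [mul_le_mul_of_nonneg_left (hC x) (half_pos hμ).le]
  refine ⟨μ, hμ, -(μ / 2 * C), fun X₁ X₂ X₁' X₂' hX₁ hX₂ hX₁' hX₂' hbc₁ hbc₂ => ?_⟩
  have hboundary : (X₁ 0 - X₂ 0) ⬝ᵥ Λ *ᵥ (X₁ 0 - X₂ 0) ≤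
      Real.exp μ * ((X₁ 1 - X₂ 1) ⬝ᵥ Λ *ᵥ (X₁ 1 - X₂ 1)) := by
    rw [hbc₁, hbc₂]
    exact (hM _ _).trans
      (mul_le_mul_of_nonneg_right hMμ (hΛ.posSemidef.dotProduct_mulVec_nonneg _))
  refine (integral_exp_mul_dotProduct_le (isHermitian_iff_isSymm.1 hΛ.isHermitian) habsorb
    zero_le_one (fun z hz => (hX₁ z hz).fun_sub (hX₂ z hz)) (hX₁'.fun_sub hX₂')).trans ?_
  rw [mul_zero, Real.exp_zero, one_mul, mul_one]
  linarith

/-- there exist `μ > 0` and `ρ ∈ ℝ` such that for all `C¹` functions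
`X₁, X₂ : [0,1] → ℝⁿ` satisfying the saturated boundary condition, with `X̃ = X₁ - X₂`,
one has `∫₀¹ e^{μ z} X̃(z)ᵀ (-Λ X̃′(z) + ρ X̃(z)) dz ≤ 0`, i.e. the operator
`X ↦ -ΛX_z + ρX` with this boundary condition is non-accretive for `⟨·,·⟩_μ`. -/
theorem nonaccretive {n m : ℕ}
    (Λ : Matrix (Fin n) (Fin n) ℝ) (hΛdiag : Λ.IsDiag) (hΛpos : ∀ i, 0 < Λ i i)
    (H : Matrix (Fin n) (Fin n) ℝ) (B : Matrix (Fin n) (Fin m) ℝ)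
    (K : Matrix (Fin m) (Fin n) ℝ)
    (ubar : Fin m → ℝ) (hubar : ∀ i, 0 < ubar i) :
    ∃ μ : ℝ, 0 < μ ∧ ∃ ρ : ℝ,
      ∀ (X₁ X₂ : ℝ → Fin n → ℝ) (X₁' X₂' : ℝ → Fin n → ℝ),
        (∀ z ∈ Icc (0:ℝ) 1, HasDerivWithinAt X₁ (X₁' z) (Icc (0:ℝ) 1) z) →
        (∀ z ∈ Icc (0:ℝ) 1, HasDerivWithinAt X₂ (X₂' z) (Icc (0:ℝ) 1) z) →
        ContinuousOn X₁' (Icc (0:ℝ) 1) →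
        ContinuousOn X₂' (Icc (0:ℝ) 1) →
        (X₁ 0 = (H + B * K).mulVec (X₁ 1) + B.mulVec (deadzone ubar (K.mulVec (X₁ 1)))) →
        (X₂ 0 = (H + B * K).mulVec (X₂ 1) + B.mulVec (deadzone ubar (K.mulVec (X₂ 1)))) →
        ∫ z in (0:ℝ)..1, Real.exp (μ * z) *
            ((X₁ z - X₂ z) ⬝ᵥ
              (-(Λ.mulVec (X₁' z - X₂' z)) + ρ • (X₁ z - X₂ z))) ≤ 0 := by
  obtain ⟨L, hL⟩ := exists_lipschitzWith_mulVec_add_mulVec (H + B * K) B K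
    (lipschitzWith_deadzone fun i => (hubar i).le)
  exact nonaccretive_general (posDef_of_isDiag hΛdiag hΛpos) hL
end

section
/- Let E and F be real normed vector spaces, let c₁, c₂, c₃, χ > 0, let V : E → ℝ be Fréchet differentiable and satisfy c₁‖ζ‖² ≤ V(ζ) ≤ c₂‖ζ‖² for all ζ ∈ E. Let T > 0, let X : [0,T] → E be differentiable, and let d : [0,T] → F be continuous, and assume that for all t ∈ [0,T], DV(X(t))(X′(t)) ≤ −c₃ V(X(t)) + χ²‖d(t)‖². Then for all t ∈ [0,T], ‖X(t)‖ ≤ e^{−(c₃/2)t}·√(c₂/c₁)·‖X(0)‖ + (χ/√c₁)·√(∫₀ᵗ ‖d(θ)‖² dθ). -/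
open Set

/-!
Along the trajectory, `v = V ∘ X` satisfies `v' ≤ -c₃ v + χ² ‖d‖²`, so `s ↦ e^{c₃ s} v s` has
derivative at most `χ² e^{c₃ s} ‖d s‖²`. Integrating, and bounding the kernel `e^{-c₃ (t - s)}`
by `1`, gives `v t ≤ e^{-c₃ t} v 0 + χ² ∫₀ᵗ ‖d‖²`. The quadratic bounds on `V` and the
subadditivity of the square root turn this into the estimate on `‖X t‖`.
-/

section Gronwall

variable {f f' w : ℝ → ℝ} {a b c : ℝ}

theorem le_exp_mul_add_integral_exp_mul_of_deriv_right_le (hab : a ≤ b)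
    (hf : ContinuousOn f (Icc a b))
    (hf' : ∀ s ∈ Ioo a b, HasDerivWithinAt f (f' s) (Ioi s) s)
    (hw : IntervalIntegrable w MeasureTheory.volume a b)
    (hle : ∀ s ∈ Ioo a b, f' s ≤ -c * f s + w s) :
    f b ≤ Real.exp (-c * (b - a)) * f a + ∫ s in a..b, Real.exp (-c * (b - s)) * w s := by
  have hexp (s : ℝ) : HasDerivAt (fun s ↦ Real.exp (-c * (b - s)))
      (Real.exp (-c * (b - s)) * c) s := by
    simpa using (((hasDerivAt_id s).const_sub b).const_mul (-c)).exp
  have hexp_cont : Continuous fun s ↦ Real.exp (-c * (b - s)) := by fun_prop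
  have hint : MeasureTheory.IntegrableOn (fun s ↦ Real.exp (-c * (b - s)) * w s) (Icc a b) :=
    (intervalIntegrable_iff_integrableOn_Icc_of_le hab).1
      (hw.continuousOn_mul hexp_cont.continuousOn)
  have hderiv_le : ∀ s ∈ Ioo a b, Real.exp (-c * (b - s)) * c * f s +
      Real.exp (-c * (b - s)) * f' s ≤ Real.exp (-c * (b - s)) * w s := fun s hs ↦ by
    rw [mul_assoc, ← mul_add]
    gcongr
    linarith [hle s hs]
  have hincr := intervalIntegral.sub_le_integral_of_hasDeriv_right_of_le hab
    (hexp_cont.continuousOn.mul hf) (fun s hs ↦ (hexp s).hasDerivWithinAt.mul (hf' s hs))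
    hint hderiv_le
  simp only [Pi.mul_apply, sub_self, mul_zero, Real.exp_zero, one_mul] at hincr
  linarith

theorem le_exp_mul_add_integral_of_deriv_right_le (hc : 0 ≤ c) (hab : a ≤ b)
    (hf : ContinuousOn f (Icc a b))
    (hf' : ∀ s ∈ Ioo a b, HasDerivWithinAt f (f' s) (Ioi s) s)
    (hw : IntervalIntegrable w MeasureTheory.volume a b) (hw_nonneg : ∀ s ∈ Icc a b, 0 ≤ w s)
    (hle : ∀ s ∈ Ioo a b, f' s ≤ -c * f s + w s) :
    f b ≤ Real.exp (-c * (b - a)) * f a + ∫ s in a..b, w s := by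
  have hkernel : ∀ s ∈ Icc a b, Real.exp (-c * (b - s)) * w s ≤ w s := fun s hs ↦
    mul_le_of_le_one_left (hw_nonneg s hs) <| Real.exp_le_one_iff.2 <|
      mul_nonpos_of_nonpos_of_nonneg (neg_nonpos.2 hc) (sub_nonneg.2 hs.2)
  calc f b
      ≤ Real.exp (-c * (b - a)) * f a + ∫ s in a..b, Real.exp (-c * (b - s)) * w s :=
        le_exp_mul_add_integral_exp_mul_of_deriv_right_le hab hf hf' hw hle
    _ ≤ Real.exp (-c * (b - a)) * f a + ∫ s in a..b, w s := by
        gcongr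
        exact intervalIntegral.integral_mono_on hab
          (hw.continuousOn_mul (by fun_prop)) hw hkernel

end Gronwall

theorem sqrt_add_le_sqrt_add_sqrt (x y : ℝ) : √(x + y) ≤ √x + √y := by
  have le_sq_sqrt (z : ℝ) : z ≤ √z ^ 2 := (Real.sqrt_le_iff.1 le_rfl).2
  refine Real.sqrt_le_iff.2 ⟨by positivity, ?_⟩
  calc x + y ≤ √x ^ 2 + √y ^ 2 := add_le_add (le_sq_sqrt x) (le_sq_sqrt y)
    _ ≤ (√x + √y) ^ 2 :=
      pow_add_pow_le (Real.sqrt_nonneg x) (Real.sqrt_nonneg y) two_ne_zero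

theorem le_exp_mul_sqrt_mul_add_of_mul_sq_le {c₁ c₂ χ k r r₀ I : ℝ} (hc₁ : 0 < c₁)
    (hχ : 0 ≤ χ) (hr₀ : 0 ≤ r₀)
    (h : c₁ * r ^ 2 ≤ Real.exp k * (c₂ * r₀ ^ 2) + χ ^ 2 * I) :
    r ≤ Real.exp (k / 2) * √(c₂ / c₁) * r₀ + χ / √c₁ * √I := by
  have hsq : r ^ 2 ≤ Real.exp k * (c₂ / c₁ * r₀ ^ 2) + χ ^ 2 / c₁ * I := by
    rw [← mul_le_mul_iff_right₀ hc₁]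
    refine h.trans_eq ?_
    field_simp
  calc r ≤ √(Real.exp k * (c₂ / c₁ * r₀ ^ 2) + χ ^ 2 / c₁ * I) := Real.le_sqrt_of_sq_le hsq
    _ ≤ √(Real.exp k * (c₂ / c₁ * r₀ ^ 2)) + √(χ ^ 2 / c₁ * I) := sqrt_add_le_sqrt_add_sqrt _ _
    _ = Real.exp (k / 2) * √(c₂ / c₁) * r₀ + χ / √c₁ * √I := by
      rw [Real.sqrt_mul (Real.exp_nonneg k), Real.sqrt_mul' _ (sq_nonneg r₀), Real.sqrt_sq hr₀,
        ← Real.exp_half, Real.sqrt_mul (by positivity), Real.sqrt_div (sq_nonneg χ),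
        Real.sqrt_sq hχ, mul_assoc]

theorem dissipation_implies_ISS_general
    {E F : Type*} [NormedAddCommGroup E] [NormedSpace ℝ E] [SeminormedAddCommGroup F]
    {c₁ c₂ c₃ χ T : ℝ} (hc₁ : 0 < c₁) (hc₃ : 0 ≤ c₃) (hχ : 0 ≤ χ)
    {V : E → ℝ} {V' : E → E →L[ℝ] ℝ} {X X' : ℝ → E} {d : ℝ → F}
    (hV : ∀ t ∈ Icc 0 T, HasFDerivAt V (V' (X t)) (X t))
    (hV_lower : ∀ t ∈ Icc 0 T, c₁ * ‖X t‖ ^ 2 ≤ V (X t)) (hV_upper : V (X 0) ≤ c₂ * ‖X 0‖ ^ 2)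
    (hX : ContinuousOn X (Icc 0 T))
    (hX' : ∀ t ∈ Ioo 0 T, HasDerivWithinAt X (X' t) (Ioi t) t)
    (hd : IntervalIntegrable (fun t ↦ ‖d t‖ ^ 2) MeasureTheory.volume 0 T)
    (hdiss : ∀ t ∈ Ioo 0 T, V' (X t) (X' t) ≤ -c₃ * V (X t) + χ ^ 2 * ‖d t‖ ^ 2) :
    ∀ t ∈ Icc 0 T,
      ‖X t‖ ≤ Real.exp (-(c₃ / 2) * t) * √(c₂ / c₁) * ‖X 0‖ +
        χ / √c₁ * √(∫ θ in (0 : ℝ)..t, ‖d θ‖ ^ 2) := by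
  intro t ht
  have hIcc : Icc 0 t ⊆ Icc 0 T := Icc_subset_Icc_right ht.2
  have hIoo : Ioo 0 t ⊆ Ioo 0 T := Ioo_subset_Ioo_right ht.2
  have hd_sq : IntervalIntegrable (fun s ↦ χ ^ 2 * ‖d s‖ ^ 2) MeasureTheory.volume 0 t :=
    (hd.mono_set (uIcc_subset_uIcc_left (Icc_subset_uIcc ht))).const_mul _
  have hVX : V (X t) ≤ Real.exp (-c₃ * t) * V (X 0) + χ ^ 2 * ∫ θ in (0 : ℝ)..t, ‖d θ‖ ^ 2 := by
    simpa using le_exp_mul_add_integral_of_deriv_right_le hc₃ ht.1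
      (fun s hs ↦ (hV s (hIcc hs)).continuousAt.comp_continuousWithinAt (hX.mono hIcc s hs))
      (fun s hs ↦ (hV s (hIcc (Ioo_subset_Icc_self hs))).comp_hasDerivWithinAt s
        (hX' s (hIoo hs)))
      hd_sq (fun s _ ↦ by positivity) (fun s hs ↦ hdiss s (hIoo hs))
  have hnorm_sq : c₁ * ‖X t‖ ^ 2 ≤ Real.exp (-c₃ * t) * (c₂ * ‖X 0‖ ^ 2) +
      χ ^ 2 * ∫ θ in (0 : ℝ)..t, ‖d θ‖ ^ 2 :=
    (hV_lower t ht).trans (hVX.trans (by gcongr))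
  rw [show -(c₃ / 2) * t = -c₃ * t / 2 by ring]
  exact le_exp_mul_sqrt_mul_add_of_mul_sq_le hc₁ hχ (norm_nonneg _) hnorm_sq

/-- abstract dissipation inequality implies the ISS bound
`‖X(t)‖ ≤ e^{-(c₃/2)t} √(c₂/c₁) ‖X(0)‖ + (χ/√c₁) √(∫₀ᵗ ‖d(θ)‖² dθ)`. -/
theorem dissipation_implies_ISS
    {E F : Type*} [NormedAddCommGroup E] [NormedSpace ℝ E]
    [NormedAddCommGroup F] [NormedSpace ℝ F]
    (c₁ c₂ c₃ χ : ℝ) (hc₁ : 0 < c₁) (hc₂ : 0 < c₂) (hc₃ : 0 < c₃) (hχ : 0 < χ)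
    (V : E → ℝ) (V' : E → E →L[ℝ] ℝ)
    (hV : ∀ x : E, HasFDerivAt V (V' x) x)
    (hVbound : ∀ ζ : E, c₁ * ‖ζ‖ ^ 2 ≤ V ζ ∧ V ζ ≤ c₂ * ‖ζ‖ ^ 2)
    (T : ℝ) (hT : 0 < T)
    (X : ℝ → E) (X' : ℝ → E)
    (hX : ∀ t ∈ Icc (0:ℝ) T, HasDerivWithinAt X (X' t) (Icc (0:ℝ) T) t)
    (d : ℝ → F) (hd : ContinuousOn d (Icc (0:ℝ) T))
    (hdiss : ∀ t ∈ Icc (0:ℝ) T, V' (X t) (X' t) ≤ -c₃ * V (X t) + χ ^ 2 * ‖d t‖ ^ 2) :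
    ∀ t ∈ Icc (0:ℝ) T,
      ‖X t‖ ≤ Real.exp (-(c₃ / 2) * t) * Real.sqrt (c₂ / c₁) * ‖X 0‖ +
        (χ / Real.sqrt c₁) * Real.sqrt (∫ θ in (0:ℝ)..t, ‖d θ‖ ^ 2) := by
  exact dissipation_implies_ISS_general hc₁ hc₃.le hχ.le (fun t _ ↦ hV (X t))
    (fun t _ ↦ (hVbound (X t)).1) (hVbound (X 0)).2 (fun t ht ↦ (hX t ht).continuousWithinAt)
    (fun t ht ↦ ((hX t (Ioo_subset_Icc_self ht)).hasDerivAt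
      (Icc_mem_nhds ht.1 ht.2)).hasDerivWithinAt)
    ((hd.norm.pow 2).intervalIntegrable_of_Icc hT.le)
    (fun t ht ↦ hdiss t (Ioo_subset_Icc_self ht))
end

section
/- Let P ∈ ℝ^{n×n} and T ∈ ℝ^{m×m} be diagonal positive definite matrices and μ > 0, and suppose the block matrix [[H_clᵀPΛH_cl − e^{−μ}PΛ, H_clᵀPΛB − KᵀT],[BᵀPΛH_cl − TK, BᵀPΛB − 2T]] is negative semidefinite. Then for every ξ ∈ ℝⁿ, (H_cl ξ + Bφ(Kξ))ᵀ PΛ (H_cl ξ + Bφ(Kξ)) ≤ e^{−μ} ξᵀ PΛ ξ. -/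
open Matrix

/-!
The dead-zone satisfies the sector condition `φ(u)ᵀ T (φ(u) + u) ≤ 0` for nonnegative diagonal `T`,
because `φ(u)ᵢ` and `σ(u)ᵢ = φ(u)ᵢ + uᵢ` have opposite signs. With `A = H_cl`, `Q = PΛ` and
`W = e^{-μ} PΛ`, the LMI says that `(Aξ + Bp)ᵀ Q (Aξ + Bp) - ξᵀ W ξ - 2 pᵀ T (p + Kξ) ≤ 0` for all
`ξ` and `p`. At `p = φ(Kξ)` the term `- 2 pᵀ T (p + Kξ)` is nonnegative and can be dropped
(S-procedure).
-/

section SectorCondition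

theorem abs_mul_real_sign (x : ℝ) : |x| * Real.sign x = x := by
  rcases lt_trichotomy x 0 with hx | rfl | hx
  · simp [abs_of_neg hx, Real.sign_of_neg hx]
  · simp
  · simp [abs_of_pos hx, Real.sign_of_pos hx]

theorem deadzone_apply_eq_mul_sign {m : ℕ} (ubar u : Fin m → ℝ) (i : Fin m) :
    deadzone ubar u i = (min |u i| (ubar i) - |u i|) * Real.sign (u i) := by
  rw [sub_mul, abs_mul_real_sign]
  rfl

theorem deadzone_mul_saturate_nonpos {m : ℕ} {ubar : Fin m → ℝ} (hubar : ∀ i, 0 ≤ ubar i)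
    (u : Fin m → ℝ) (i : Fin m) : deadzone ubar u i * saturate ubar u i ≤ 0 := by
  have hmin_nonneg : 0 ≤ min |u i| (ubar i) := le_min (abs_nonneg _) (hubar i)
  have hmin_le : min |u i| (ubar i) - |u i| ≤ 0 := sub_nonpos.mpr (min_le_left _ _)
  calc deadzone ubar u i * saturate ubar u i
      = (min |u i| (ubar i) - |u i|) * min |u i| (ubar i) * Real.sign (u i) ^ 2 := by
        rw [deadzone_apply_eq_mul_sign, saturate]
        ring
    _ ≤ 0 := mul_nonpos_of_nonpos_of_nonneg
        (mul_nonpos_of_nonpos_of_nonneg hmin_le hmin_nonneg) (sq_nonneg _)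

theorem deadzone_add_self {m : ℕ} (ubar u : Fin m → ℝ) :
    deadzone ubar u + u = saturate ubar u :=
  sub_add_cancel _ _

theorem dotProduct_mulVec_nonpos_of_isDiag {ι R : Type*} [Fintype ι] [CommSemiring R]
    [PartialOrder R] [IsOrderedRing R] {T : Matrix ι ι R} (hT : T.IsDiag)
    (hT_nonneg : ∀ i, 0 ≤ T i i) {x y : ι → R} (hxy : ∀ i, x i * y i ≤ 0) : x ⬝ᵥ T *ᵥ y ≤ 0 := by
  classical
  rw [← hT.diagonal_diag]
  refine Finset.sum_nonpos fun i _ => ?_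
  rw [mulVec_diagonal, diag_apply, mul_left_comm]
  exact mul_nonpos_of_nonneg_of_nonpos (hT_nonneg i) (hxy i)

theorem deadzone_sector_condition {m : ℕ} {ubar : Fin m → ℝ} (hubar : ∀ i, 0 ≤ ubar i)
    {T : Matrix (Fin m) (Fin m) ℝ} (hT : T.IsDiag) (hT_nonneg : ∀ i, 0 ≤ T i i)
    (u : Fin m → ℝ) : deadzone ubar u ⬝ᵥ T *ᵥ (deadzone ubar u + u) ≤ 0 := by
  rw [deadzone_add_self]
  exact dotProduct_mulVec_nonpos_of_isDiag hT hT_nonneg (deadzone_mul_saturate_nonpos hubar u)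

end SectorCondition

section SProcedure

variable {l m n R : Type*} [Fintype l] [Fintype m]

theorem dotProduct_transpose_mulVec_eq_mulVec_dotProduct [NonUnitalCommSemiring R]
    (A : Matrix l m R) (x : m → R) (y : l → R) : x ⬝ᵥ Aᵀ *ᵥ y = A *ᵥ x ⬝ᵥ y := by
  rw [dotProduct_transpose_mulVec, dotProduct_comm]

variable [CommRing R]

/-- The matrix of the LMI, for general weights: `Q` on the output `Aξ + Bp`, `W` on the state `ξ`
and the multiplier `T` on the sector condition `pᵀ T (p + Kξ) ≤ 0`. -/
def sectorLMIMatrix (A : Matrix l n R) (B : Matrix l m R) (K : Matrix m n R)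
    (Q : Matrix l l R) (W : Matrix n n R) (T : Matrix m m R) : Matrix (n ⊕ m) (n ⊕ m) R :=
  fromBlocks (Aᵀ * Q * A - W) (Aᵀ * Q * B - Kᵀ * T)
    (Bᵀ * Q * A - T * K) (Bᵀ * Q * B - 2 • T)

variable [Fintype n] {A : Matrix l n R} {B : Matrix l m R} {K : Matrix m n R}
  {Q : Matrix l l R} {W : Matrix n n R} {T : Matrix m m R}

theorem dotProduct_sectorLMIMatrix_mulVec (hT : T.IsSymm) (ξ : n → R) (p : m → R) :
    Sum.elim ξ p ⬝ᵥ sectorLMIMatrix A B K Q W T *ᵥ Sum.elim ξ p =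
      (A *ᵥ ξ + B *ᵥ p) ⬝ᵥ Q *ᵥ (A *ᵥ ξ + B *ᵥ p) - ξ ⬝ᵥ W *ᵥ ξ -
        2 * (p ⬝ᵥ T *ᵥ (p + K *ᵥ ξ)) := by
  have hKT : K *ᵥ ξ ⬝ᵥ T *ᵥ p = p ⬝ᵥ T *ᵥ K *ᵥ ξ := by
    rw [← dotProduct_transpose_mulVec, hT.eq]
  rw [sectorLMIMatrix, fromBlocks_mulVec, sumElim_dotProduct_sumElim]
  simp only [Sum.elim_comp_inl, Sum.elim_comp_inr, sub_mulVec, ← mulVec_mulVec,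
    mulVec_add, dotProduct_add, add_dotProduct, dotProduct_sub, two_nsmul, add_mulVec,
    dotProduct_transpose_mulVec_eq_mulVec_dotProduct, hKT]
  ring

theorem dotProduct_mulVec_le_of_sectorLMI [PartialOrder R] [IsOrderedRing R] [StarRing R]
    [TrivialStar R]
    (hLMI : (-sectorLMIMatrix A B K Q W T).PosSemidef) (hT : T.IsSymm) {ξ : n → R} {p : m → R}
    (hp : p ⬝ᵥ T *ᵥ (p + K *ᵥ ξ) ≤ 0) :
    (A *ᵥ ξ + B *ᵥ p) ⬝ᵥ Q *ᵥ (A *ᵥ ξ + B *ᵥ p) ≤ ξ ⬝ᵥ W *ᵥ ξ := by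
  have hform : Sum.elim ξ p ⬝ᵥ sectorLMIMatrix A B K Q W T *ᵥ Sum.elim ξ p ≤ 0 := by
    simpa only [star_trivial, neg_mulVec, dotProduct_neg, neg_nonneg] using
      hLMI.dotProduct_mulVec_nonneg (Sum.elim ξ p)
  rw [dotProduct_sectorLMIMatrix_mulVec hT, sub_nonpos] at hform
  exact sub_nonpos.mp (hform.trans (mul_nonpos_of_nonneg_of_nonpos zero_le_two hp))

end SProcedure

theorem boundary_quadratic_bound_general {l n : Type*} [Fintype l] [Fintype n] {m : ℕ}
    {A : Matrix l n ℝ} {B : Matrix l (Fin m) ℝ} {K : Matrix (Fin m) n ℝ}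
    {ubar : Fin m → ℝ} (hubar : ∀ i, 0 ≤ ubar i) {Q : Matrix l l ℝ} {W : Matrix n n ℝ}
    {T : Matrix (Fin m) (Fin m) ℝ} (hT : T.IsDiag) (hT_nonneg : ∀ i, 0 ≤ T i i)
    (hLMI : (-sectorLMIMatrix A B K Q W T).PosSemidef) (ξ : n → ℝ) :
    (A *ᵥ ξ + B *ᵥ deadzone ubar (K *ᵥ ξ)) ⬝ᵥ Q *ᵥ (A *ᵥ ξ + B *ᵥ deadzone ubar (K *ᵥ ξ)) ≤
      ξ ⬝ᵥ W *ᵥ ξ :=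
  dotProduct_mulVec_le_of_sectorLMI hLMI hT.isSymm
    (deadzone_sector_condition hubar hT hT_nonneg (K *ᵥ ξ))

/-- if the LMI
`[[H_clᵀPΛH_cl - e^{-μ}PΛ, H_clᵀPΛB - KᵀT],[BᵀPΛH_cl - TK, BᵀPΛB - 2T]] ⪯ 0` holds, then
the boundary term satisfies `(H_clξ + Bφ(Kξ))ᵀPΛ(H_clξ + Bφ(Kξ)) ≤ e^{-μ} ξᵀPΛξ`. -/
theorem boundary_quadratic_bound {n m : ℕ}
    (Λ : Matrix (Fin n) (Fin n) ℝ) (hΛdiag : Λ.IsDiag) (hΛpos : ∀ i, 0 < Λ i i)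
    (H : Matrix (Fin n) (Fin n) ℝ) (B : Matrix (Fin n) (Fin m) ℝ)
    (K : Matrix (Fin m) (Fin n) ℝ)
    (ubar : Fin m → ℝ) (hubar : ∀ i, 0 < ubar i)
    (P : Matrix (Fin n) (Fin n) ℝ) (hPdiag : P.IsDiag) (hPpos : ∀ i, 0 < P i i)
    (T : Matrix (Fin m) (Fin m) ℝ) (hTdiag : T.IsDiag) (hTpos : ∀ i, 0 < T i i)
    (μ : ℝ) (hμ : 0 < μ)
    (hLMI : (-(Matrix.fromBlocks
        ((H + B * K)ᵀ * P * Λ * (H + B * K) - Real.exp (-μ) • (P * Λ))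
        ((H + B * K)ᵀ * P * Λ * B - Kᵀ * T)
        (Bᵀ * P * Λ * (H + B * K) - T * K)
        (Bᵀ * P * Λ * B - 2 • T))).PosSemidef) :
    ∀ ξ : Fin n → ℝ,
      ((H + B * K).mulVec ξ + B.mulVec (deadzone ubar (K.mulVec ξ))) ⬝ᵥ
          (P * Λ).mulVec ((H + B * K).mulVec ξ + B.mulVec (deadzone ubar (K.mulVec ξ))) ≤
        Real.exp (-μ) * (ξ ⬝ᵥ (P * Λ).mulVec ξ) := by
  intro ξ
  have hLMI_blocks :
      (-sectorLMIMatrix (H + B * K) B K (P * Λ) (Real.exp (-μ) • (P * Λ)) T).PosSemidef := by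
    simpa only [sectorLMIMatrix, ← Matrix.mul_assoc] using hLMI
  have hbound := boundary_quadratic_bound_general (fun i => (hubar i).le) hTdiag
    (fun i => (hTpos i).le) hLMI_blocks ξ
  rwa [smul_mulVec, dotProduct_smul, smul_eq_mul] at hbound
end

section
/- Let Q ∈ ℝ^{n×n} be diagonal positive definite, S ∈ ℝ^{m×m} diagonal positive definite, W ∈ ℝ^{m×n}, and μ > 0. Set P := Q⁻¹, T := S⁻¹, K := WQ⁻¹, and H_cl := H + BK. Then the 3×3 block matrix [[−QΛ⁻¹, HQ + BW, BS],[(HQ + BW)ᵀ, −e^{−μ}ΛQ, −Wᵀ],[(BS)ᵀ, −W, −2S]] is negative semidefinite if and only if the block matrix [[H_clᵀPΛH_cl − e^{−μ}PΛ, H_clᵀPΛB − KᵀT],[BᵀPΛH_cl − TK, BᵀPΛB − 2T]] is negative semidefinite. -/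
open Matrix

/-!
Pivoting on the block `-QΛ⁻¹`, whose negative has inverse `PΛ`, the Schur complement of the 3×3
matrix is `D + Xᴴ(PΛ)X` with `X = [HQ + BW, BS]` and `D` the lower right 2×2 block. The congruence
by `U = diag(P, T)` turns `X` into `XU = [H_cl, B]` and so `D + Xᴴ(PΛ)X` into the matrix of the
2×2 condition.
-/

section Blocks

variable {R l m n o p q : Type*}

lemma fromBlocks_fromBlocks_eq_submatrix_sumAssoc
    (A₁₁ : Matrix l o R) (A₁₂ : Matrix l p R) (A₁₃ : Matrix l q R)
    (A₂₁ : Matrix m o R) (A₂₂ : Matrix m p R) (A₂₃ : Matrix m q R)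
    (A₃₁ : Matrix n o R) (A₃₂ : Matrix n p R) (A₃₃ : Matrix n q R) :
    fromBlocks (fromBlocks A₁₁ A₁₂ A₂₁ A₂₂) (fromRows A₁₃ A₂₃) (fromCols A₃₁ A₃₂) A₃₃ =
      (fromBlocks A₁₁ (fromCols A₁₂ A₁₃) (fromRows A₂₁ A₃₁)
        (fromBlocks A₂₂ A₂₃ A₃₂ A₃₃)).submatrix
        (Equiv.sumAssoc l m n) (Equiv.sumAssoc o p q) := by
  ext ((i | i) | i) ((j | j) | j) <;> rfl

lemma conjTranspose_fromCols_mul_mul_fromCols [Semiring R] [StarRing R] [Fintype l]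
    (F : Matrix l m R) (B : Matrix l n R) (G : Matrix l l R) :
    (fromCols F B)ᴴ * G * fromCols F B =
      fromBlocks (Fᴴ * G * F) (Fᴴ * G * B) (Bᴴ * G * F) (Bᴴ * G * B) := by
  rw [conjTranspose_fromCols_eq_fromRows_conjTranspose, fromRows_mul, fromRows_mul_fromCols]

lemma conjTranspose_fromBlocks_diag_mul_mul [Semiring R] [StarRing R]
    [Fintype m] [Fintype n] (P : Matrix m m R) (T : Matrix n n R)
    (A : Matrix m m R) (B : Matrix m n R) (C : Matrix n m R) (D : Matrix n n R) :
    (fromBlocks P 0 0 T)ᴴ * fromBlocks A B C D * fromBlocks P 0 0 T =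
      fromBlocks (Pᴴ * A * P) (Pᴴ * B * T) (Tᴴ * C * P) (Tᴴ * D * T) := by
  simp only [fromBlocks_conjTranspose, conjTranspose_zero, fromBlocks_multiply, Matrix.zero_mul,
    Matrix.mul_zero, add_zero, zero_add]

lemma fromCols_mul_fromBlocks_inv_diag [CommRing R] [Fintype m] [DecidableEq m]
    [Fintype n] [DecidableEq n] {Q : Matrix m m R} {S : Matrix n n R}
    (hQ : IsUnit Q) (hS : IsUnit S) (H : Matrix l m R) (B : Matrix l n R) (W : Matrix n m R) :
    fromCols (H * Q + B * W) (B * S) * fromBlocks Q⁻¹ 0 0 S⁻¹ =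
      fromCols (H + B * (W * Q⁻¹)) B := by
  rw [isUnit_iff_isUnit_det] at hQ hS
  simp only [fromCols_mul_fromBlocks, Matrix.mul_zero, add_zero, zero_add, Matrix.add_mul,
    mul_nonsing_inv_cancel_right _ _ hQ, mul_nonsing_inv_cancel_right _ _ hS, Matrix.mul_assoc]

lemma conjTranspose_fromBlocks_inv_diag_mul_mul [CommRing R] [StarRing R] [Fintype m]
    [DecidableEq m] [Fintype n] [DecidableEq n] {Q : Matrix m m R} {S : Matrix n n R}
    (hQ : Q.IsHermitian) (hS : S.IsHermitian) (hQunit : IsUnit Q) (hSunit : IsUnit S)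
    (Λ : Matrix m m R) (W : Matrix n m R) (c : R) :
    (fromBlocks Q⁻¹ 0 0 S⁻¹)ᴴ * fromBlocks (-(c • (Λ * Q))) (-Wᴴ) (-W) (-(2 • S)) *
        fromBlocks Q⁻¹ 0 0 S⁻¹ =
      fromBlocks (-(c • (Q⁻¹ * Λ))) (-((W * Q⁻¹)ᴴ * S⁻¹)) (-(S⁻¹ * (W * Q⁻¹)))
        (-(2 • S⁻¹)) := by
  rw [isUnit_iff_isUnit_det] at hQunit hSunit
  rw [conjTranspose_fromBlocks_diag_mul_mul]
  simp only [conjTranspose_mul, hQ.inv.eq, hS.inv.eq, Matrix.mul_neg, Matrix.neg_mul,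
    Matrix.mul_smul, Matrix.smul_mul, Matrix.mul_assoc, mul_nonsing_inv _ hQunit,
    mul_nonsing_inv _ hSunit, Matrix.mul_one]

end Blocks

lemma inv_mul_inv_of_isHermitian {R n : Type*} [CommRing R] [StarRing R] [Fintype n]
    [DecidableEq n] {A B : Matrix n n R} (hA : A.IsHermitian) (hB : B.IsHermitian)
    (hBunit : IsUnit B) (hAB : (A * B⁻¹).IsHermitian) : (A * B⁻¹)⁻¹ = A⁻¹ * B := by
  rw [← hAB.inv.eq, Matrix.mul_inv_rev,
    nonsing_inv_nonsing_inv _ ((isUnit_iff_isUnit_det _).1 hBunit), conjTranspose_mul,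
    hA.inv.eq, hB.eq]

lemma posDef_of_isDiag_s13 {R n : Type*} [Ring R] [PartialOrder R] [StarRing R] [StarOrderedRing R]
    [NoZeroDivisors R] {A : Matrix n n R} (hA : A.IsDiag) (hpos : ∀ i, 0 < A i i) :
    A.PosDef := by
  classical
  rw [← hA.diagonal_diag]
  exact .diagonal hpos

lemma posSemidef_neg_fromBlocks_iff_congruence {R m n : Type*} [CommRing R] [PartialOrder R]
    [StarRing R] [StarOrderedRing R] [Fintype m] [DecidableEq m] [Fintype n] [DecidableEq n]
    {A : Matrix m m R} [Invertible A] (hA : A.PosDef) (X : Matrix m n R) (D : Matrix n n R)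
    {U : Matrix n n R} (hU : IsUnit U) :
    (-fromBlocks (-A) X Xᴴ D).PosSemidef ↔
      (-(Uᴴ * D * U + (X * U)ᴴ * A⁻¹ * (X * U))).PosSemidef := by
  calc (-fromBlocks (-A) X Xᴴ D).PosSemidef
      ↔ (fromBlocks A (-X) (-X)ᴴ (-D)).PosSemidef := by
        rw [fromBlocks_neg, neg_neg, conjTranspose_neg]
    _ ↔ (-D - (-X)ᴴ * A⁻¹ * (-X)).PosSemidef := hA.fromBlocks₁₁ _ _
    _ ↔ (star U * (-D - (-X)ᴴ * A⁻¹ * (-X)) * U).PosSemidef :=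
        hU.posSemidef_star_left_conjugate_iff.symm
    _ ↔ (-(Uᴴ * D * U + (X * U)ᴴ * A⁻¹ * (X * U))).PosSemidef := by
        rw [star_eq_conjTranspose, conjTranspose_mul, conjTranspose_neg]
        simp only [Matrix.mul_neg, Matrix.neg_mul, neg_neg, Matrix.mul_sub, Matrix.sub_mul,
          Matrix.mul_assoc, neg_add']

section Schur

variable {K m n : Type*} [Field K] [PartialOrder K] [StarRing K] [StarOrderedRing K]
  [Fintype m] [DecidableEq m] [Fintype n] [DecidableEq n]

lemma posDef_mul_inv_of_isDiag {A B : Matrix n n K} (hA : A.IsDiag) (hApos : ∀ i, 0 < A i i)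
    (hB : B.IsDiag) (hBpos : ∀ i, 0 < B i i) : (A * B⁻¹).PosDef := by
  obtain ⟨a, rfl⟩ : ∃ a, A = diagonal a := ⟨_, hA.diagonal_diag.symm⟩
  obtain ⟨b, rfl⟩ : ∃ b, B = diagonal b := ⟨_, hB.diagonal_diag.symm⟩
  have hBinv : (diagonal b)⁻¹.PosDef := (posDef_of_isDiag_s13 hB hBpos).inv
  simp only [diagonal_apply_eq] at hApos
  rw [inv_diagonal] at hBinv ⊢
  rw [diagonal_mul_diagonal]
  exact .diagonal fun i ↦ mul_pos (hApos i) (posDef_diagonal_iff.1 hBinv i)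

theorem schur_congruence_equivalence_general {Λ Q : Matrix n n K} {S : Matrix m m K}
    (hΛ : Λ.IsHermitian) (hQ : Q.IsHermitian) (hQΛ : (Q * Λ⁻¹).PosDef)
    (hS : S.IsHermitian) (hSunit : IsUnit S)
    (H : Matrix n n K) (B : Matrix n m K) (W : Matrix m n K) (c : K) :
    (-(fromBlocks
        (fromBlocks
          (-(Q * Λ⁻¹)) (H * Q + B * W)
          ((H * Q + B * W)ᴴ) (-(c • (Λ * Q))))
        (fromRows (B * S) (-Wᴴ))
        (fromCols ((B * S)ᴴ) (-W))
        (-(2 • S)))).PosSemidef ↔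
    (-(fromBlocks
        ((H + B * (W * Q⁻¹))ᴴ * Q⁻¹ * Λ * (H + B * (W * Q⁻¹)) - c • (Q⁻¹ * Λ))
        ((H + B * (W * Q⁻¹))ᴴ * Q⁻¹ * Λ * B - (W * Q⁻¹)ᴴ * S⁻¹)
        (Bᴴ * Q⁻¹ * Λ * (H + B * (W * Q⁻¹)) - S⁻¹ * (W * Q⁻¹))
        (Bᴴ * Q⁻¹ * Λ * B - 2 • S⁻¹))).PosSemidef := by
  obtain ⟨hQunit, hΛunit⟩ : IsUnit Q ∧ IsUnit Λ := by
    simpa [isUnit_nonsing_inv_iff, isUnit_iff_isUnit_det, det_mul] using hQΛ.isUnit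
  have hU : IsUnit (fromBlocks Q⁻¹ 0 0 S⁻¹) :=
    isUnit_fromBlocks_zero₂₁.2 ⟨isUnit_nonsing_inv_iff.2 hQunit, isUnit_nonsing_inv_iff.2 hSunit⟩
  have := hQΛ.isUnit.invertible
  have hpivot : (Q * Λ⁻¹)⁻¹ = Q⁻¹ * Λ :=
    inv_mul_inv_of_isHermitian hQ hΛ hΛunit hQΛ.isHermitian
  have hXU : fromCols (H * Q + B * W) (B * S) * fromBlocks Q⁻¹ 0 0 S⁻¹ =
      fromCols (H + B * (W * Q⁻¹)) B :=
    fromCols_mul_fromBlocks_inv_diag hQunit hSunit H B W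
  rw [fromBlocks_fromBlocks_eq_submatrix_sumAssoc, ← Pi.neg_apply, ← Pi.neg_apply,
    ← submatrix_neg, posSemidef_submatrix_equiv, ← conjTranspose_fromCols_eq_fromRows_conjTranspose,
    posSemidef_neg_fromBlocks_iff_congruence hQΛ _ _ hU, hpivot, hXU,
    conjTranspose_fromBlocks_inv_diag_mul_mul hQ hS hQunit hSunit,
    conjTranspose_fromCols_mul_mul_fromCols, fromBlocks_add]
  simp only [neg_add_eq_sub, Matrix.mul_assoc]

end Schur

/-- the congruence/Schur-complement equivalence between the 3×3 block LMI of
Corollary 1 (in the variables `Q, S, W`) and the 2×2 block condition (C1) of Theorem 2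
(with `P = Q⁻¹`, `T = S⁻¹`, `K = WQ⁻¹`, `H_cl = H + BK`). -/
theorem schur_congruence_equivalence {n m : ℕ}
    (Λ : Matrix (Fin n) (Fin n) ℝ) (hΛdiag : Λ.IsDiag) (hΛpos : ∀ i, 0 < Λ i i)
    (H : Matrix (Fin n) (Fin n) ℝ) (B : Matrix (Fin n) (Fin m) ℝ)
    (Q : Matrix (Fin n) (Fin n) ℝ) (hQdiag : Q.IsDiag) (hQpos : ∀ i, 0 < Q i i)
    (S : Matrix (Fin m) (Fin m) ℝ) (hSdiag : S.IsDiag) (hSpos : ∀ i, 0 < S i i)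
    (W : Matrix (Fin m) (Fin n) ℝ) (μ : ℝ) (hμ : 0 < μ) :
    (-(Matrix.fromBlocks
        (Matrix.fromBlocks
          (-(Q * Λ⁻¹)) (H * Q + B * W)
          ((H * Q + B * W)ᵀ) (-(Real.exp (-μ) • (Λ * Q))))
        (Matrix.fromRows (B * S) (-Wᵀ))
        (Matrix.fromCols ((B * S)ᵀ) (-W))
        (-(2 • S)))).PosSemidef ↔
    (-(Matrix.fromBlocks
        ((H + B * (W * Q⁻¹))ᵀ * Q⁻¹ * Λ * (H + B * (W * Q⁻¹)) -
          Real.exp (-μ) • (Q⁻¹ * Λ))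
        ((H + B * (W * Q⁻¹))ᵀ * Q⁻¹ * Λ * B - (W * Q⁻¹)ᵀ * S⁻¹)
        (Bᵀ * Q⁻¹ * Λ * (H + B * (W * Q⁻¹)) - S⁻¹ * (W * Q⁻¹))
        (Bᵀ * Q⁻¹ * Λ * B - 2 • S⁻¹))).PosSemidef := by
  simpa only [conjTranspose_eq_transpose_of_trivial] using
    schur_congruence_equivalence_general
      (posDef_of_isDiag_s13 hΛdiag hΛpos).isHermitian (posDef_of_isDiag_s13 hQdiag hQpos).isHermitian
      (posDef_mul_inv_of_isDiag hQdiag hQpos hΛdiag hΛpos)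
      (posDef_of_isDiag_s13 hSdiag hSpos).isHermitian (posDef_of_isDiag_s13 hSdiag hSpos).isUnit
      H B W (Real.exp (-μ))
end
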